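/- In any 2-crossed module (L →δ H →∂ G, ▷, {·,·}_p), the map ▷' : H × L → L defined by h ▷' l = l · {δ(l)⁻¹, h}_p is a left action of the group H on L: for all l ∈ L one has 1_H ▷' l = l, and for all h₁, h₂ ∈ H and l ∈ L one has (h₁h₂) ▷' l = h₁ ▷' (h₂ ▷' l). -/

import Mathlib

/-- A 2-crossed module `(L --δ--> H --∂--> G, ▷, Peiffer lifting)`:
groups `G H L`, homomorphisms `δ : L → H` (field `δ`) and `∂ : H → G` (field `bd`)
with `∂ ∘ δ = 1`, left actions `▷` of `G` on `H` and `L` by automorphisms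
(fields `actH`, `actL`; `G` acts on itself by conjugation), and the Peiffer
lifting `{·,·}_p : H × H → L` (field `pf`), subject to the usual axioms. -/
structure TwoCrossedModule (G H L : Type*) [Group G] [Group H] [Group L] where
  δ : L →* H
  bd : H →* G
  actH : G →* MulAut H
  actL : G →* MulAut L
  pf : H → H → L
  comp_eq_one : ∀ l : L, bd (δ l) = 1
  -- (i) g ▷ ∂(h) = ∂(g ▷ h), where G acts on itself by conjugation
  act_bd : ∀ (g : G) (h : H), g * bd h * g⁻¹ = bd (actH g h)
  -- (i) g ▷ δ(l) = δ(g ▷ l)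
  act_δ : ∀ (g : G) (l : L), actH g (δ l) = δ (actL g l)
  -- (ii) g ▷ {h₁,h₂}_p = {g ▷ h₁, g ▷ h₂}_p
  act_pf : ∀ (g : G) (h₁ h₂ : H), actL g (pf h₁ h₂) = pf (actH g h₁) (actH g h₂)
  -- (iii) δ({h₁,h₂}_p) = h₁h₂h₁⁻¹·(∂(h₁) ▷ h₂⁻¹)
  δ_pf : ∀ h₁ h₂ : H, δ (pf h₁ h₂) = h₁ * h₂ * h₁⁻¹ * actH (bd h₁) h₂⁻¹
  -- (iv) {δ(l₁), δ(l₂)}_p = l₁l₂l₁⁻¹l₂⁻¹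
  pf_δ_δ : ∀ l₁ l₂ : L, pf (δ l₁) (δ l₂) = l₁ * l₂ * l₁⁻¹ * l₂⁻¹
  -- (v) {h₁h₂, h₃}_p = {h₁, h₂h₃h₂⁻¹}_p · (∂(h₁) ▷ {h₂,h₃}_p)
  pf_mul_left : ∀ h₁ h₂ h₃ : H,
    pf (h₁ * h₂) h₃ = pf h₁ (h₂ * h₃ * h₂⁻¹) * actL (bd h₁) (pf h₂ h₃)
  -- (vi) {h₁, h₂h₃}_p = {h₁,h₂}_p · {h₁,h₃}_p · {⟨h₁,h₃⟩_p⁻¹, ∂(h₁) ▷ h₂}_p,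
  -- where ⟨h₁,h₃⟩_p = h₁h₃h₁⁻¹·(∂(h₁) ▷ h₃⁻¹) is the Peiffer commutator
  pf_mul_right : ∀ h₁ h₂ h₃ : H,
    pf h₁ (h₂ * h₃) = pf h₁ h₂ * pf h₁ h₃ *
      pf (h₁ * h₃ * h₁⁻¹ * actH (bd h₁) h₃⁻¹)⁻¹ (actH (bd h₁) h₂)
  -- (vii) {δ(l), h}_p · {h, δ(l)}_p = l·(∂(h) ▷ l⁻¹)
  pf_δ : ∀ (h : H) (l : L), pf (δ l) h * pf h (δ l) = l * actL (bd h) l⁻¹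

namespace TwoCrossedModule

variable {G H L : Type*} [Group G] [Group H] [Group L]

/-- The map `▷' : H × L → L`, defined by `h ▷' l = l · {δ(l)⁻¹, h}_p`. -/
def act' (X : TwoCrossedModule G H L) (h : H) (l : L) : L :=
  l * X.pf (X.δ l)⁻¹ h

end TwoCrossedModule

/-!
Read as a right-multiplicativity rule, axiom (vi) says
`{k, h₁h₂}_p = {k, h₁}_p · ((∂(k) ▷ h₁) ▷' {k, h₂}_p)`. Since `δ(l)⁻¹` acts trivially through `∂`,
this gives `(h₁h₂) ▷' l = (h₁ ▷' l) · (h₁ ▷' {δ(l)⁻¹, h₂}_p)`, so composing `▷'` reduces to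
showing that each `h ▷' ·` is multiplicative. That follows from axiom (v), once it is observed that
`δ(n)` acts on `L` as conjugation by `n`.
-/

namespace TwoCrossedModule

variable {G H L : Type*} [Group G] [Group H] [Group L] (X : TwoCrossedModule G H L)

theorem bd_δ_inv (l : L) : X.bd (X.δ l)⁻¹ = 1 := by
  rw [map_inv, X.comp_eq_one, inv_one]

theorem δ_pf_δ_inv (l : L) (h : H) :
    X.δ (X.pf (X.δ l)⁻¹ h) = (X.δ l)⁻¹ * h * X.δ l * h⁻¹ := by
  rw [X.δ_pf, X.bd_δ_inv, map_one, MulAut.one_apply, inv_inv]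

theorem pf_one_left (h : H) : X.pf 1 h = 1 := by
  have pf_eq_mul_self : X.pf 1 h = X.pf 1 h * X.pf 1 h := by
    simpa using X.pf_mul_left 1 1 h
  exact left_eq_mul.mp pf_eq_mul_self

theorem act'_of_δ_eq_one {l : L} (hl : X.δ l = 1) (h : H) : X.act' h l = l := by
  rw [act', hl, inv_one, X.pf_one_left, mul_one]

theorem act'_δ (n l : L) : X.act' (X.δ n) l = n * l * n⁻¹ := by
  rw [act', ← map_inv, X.pf_δ_δ]
  group

theorem pf_mul_right_eq_mul_act' (k h₁ h₂ : H) :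
    X.pf k (h₁ * h₂) = X.pf k h₁ * X.act' (X.actH (X.bd k) h₁) (X.pf k h₂) := by
  rw [X.pf_mul_right, ← X.δ_pf, act', mul_assoc]

theorem mul_act'_eq_act'_mul_act'_pf (h₁ h₂ : H) (l : L) :
    X.act' (h₁ * h₂) l = X.act' h₁ l * X.act' h₁ (X.pf (X.δ l)⁻¹ h₂) := by
  rw [act', X.pf_mul_right_eq_mul_act', X.bd_δ_inv, map_one, MulAut.one_apply, ← mul_assoc,
    ← act']

theorem pf_one_right (k : H) : X.pf k 1 = 1 := by
  have δ_pf_one : X.δ (X.pf k 1) = 1 := by simp [X.δ_pf]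
  have pf_eq_mul_self : X.pf k 1 = X.pf k 1 * X.pf k 1 := by
    simpa only [mul_one, X.act'_of_δ_eq_one δ_pf_one] using X.pf_mul_right_eq_mul_act' k 1 1
  exact left_eq_mul.mp pf_eq_mul_self

theorem act'_mul (h : H) (l m : L) : X.act' h (l * m) = X.act' h l * X.act' h m := by
  set n := X.pf (X.δ l)⁻¹ h with hn
  have conj_eq : (X.δ l)⁻¹ * h * X.δ l = X.δ n * h := by
    rw [hn, X.δ_pf_δ_inv, inv_mul_cancel_right]
  have pf_δ_mul_inv : X.pf (X.δ (l * m))⁻¹ h = X.pf (X.δ m)⁻¹ (X.δ n * h) * n := by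
    rw [map_mul, mul_inv_rev, X.pf_mul_left, inv_inv, conj_eq, X.bd_δ_inv, map_one,
      MulAut.one_apply]
  calc X.act' h (l * m)
      = l * X.act' (X.δ n * h) m * n := by
        rw [act', pf_δ_mul_inv, act']
        simp only [mul_assoc]
    _ = l * (n * m * n⁻¹ * (n * X.pf (X.δ m)⁻¹ h * n⁻¹)) * n := by
        rw [X.mul_act'_eq_act'_mul_act'_pf, X.act'_δ, X.act'_δ]
    _ = l * n * (m * X.pf (X.δ m)⁻¹ h) := by group
    _ = X.act' h l * X.act' h m := rfl

theorem one_act' (l : L) : X.act' 1 l = l := by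
  rw [act', X.pf_one_right, mul_one]

theorem mul_act' (h₁ h₂ : H) (l : L) : X.act' (h₁ * h₂) l = X.act' h₁ (X.act' h₂ l) := by
  rw [X.mul_act'_eq_act'_mul_act'_pf, ← X.act'_mul, ← act']

end TwoCrossedModule

/-- In any 2-crossed module, `▷'` is a left action of `H` on `L`:
`1 ▷' l = l` and `(h₁h₂) ▷' l = h₁ ▷' (h₂ ▷' l)`. -/
theorem act'_is_action {G H L : Type*} [Group G] [Group H] [Group L]
    (X : TwoCrossedModule G H L) :
    (∀ l : L, X.act' 1 l = l) ∧
    (∀ (h₁ h₂ : H) (l : L), X.act' (h₁ * h₂) l = X.act' h₁ (X.act' h₂ l)) :=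
  ⟨X.one_act', X.mul_act'⟩
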